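/- Let (A,D) be an inclusion of C*-algebras and let n ∈ N(A,D) be a normalizer. Let dom n = {σ in the Gelfand spectrum of D : σ(n*nD) ≠ 0} and ran n = {σ in the Gelfand spectrum of D : σ(nn*D) ≠ 0}. Then dom n and ran n are open subsets of the Gelfand spectrum of D, and there is a homeomorphism β_n : dom n → ran n such that β_n(σ)(h) = σ(θ_n(h)) for every h in the closure of nn*D and every σ ∈ dom n. Moreover, for σ ∈ dom n, the value ρ(n*n) is the same for every state ρ on A extending σ; writing σ(n*n) for this common value, one has σ(n*n) ≠ 0 and β_n(σ)(d) = σ(n*dn)/σ(n*n) for every d ∈ D. -/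

import Mathlib

/-!
Write `a = n* n`. Although `a` need not lie in `D`, it acts on `D` as a central multiplier: for an
approximate unit `u` of `D` one has `u n d → n d`, because `n d d* n* ∈ D`, so `a d` is the limit
of the elements `(n* u n) d` of `D` (`IsNormalizer.star_mul_self_mul_mem`), and then the commutator
of `a` with an element of `D` lies in `D` and annihilates `D`
(`IsNormalizer.star_mul_self_comm`). Hence each `σ ∈ dom n` has a nonzero number `c = σ(a)`
with `σ(a e) = c σ(e)` for all `e ∈ D` (`exists_takesValue`).

The formula `d ↦ σ(n* d n) / c` defines a character `β_n(σ)` in `ran n` (`exists_betaRel`);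
multiplicativity uses that `n n*` commutes with `D`. Its value at `n n*` is again `c`, from which
`β_{n*}` inverts `β_n` (`BetaRel.inverse`), and writing `c = σ(a e) / σ(e)` locally with `e` fixed
shows continuity. The relation `n θ(h) = h n` gives `n* h n = a θ(h)`, hence
`β_n(σ)(h) = σ(θ(h))`.

If a state `ρ` extends `σ` and `d ∈ D` has `σ(d) = 1`, the Cauchy-Schwarz inequality for `ρ` gives
`ρ(x d) = ρ(x)` for all `x ∈ A` (`IsState.apply_mul_eq`); for `x = a` this says `ρ(a) = c`.
-/

open scoped ComplexOrder
open Filter Topology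

namespace CartanPaper

variable {A : Type*} [NonUnitalCStarAlgebra A]

/-- A state on a C*-algebra: a positive linear functional of norm one. -/
def IsState (ρ : A →L[ℂ] ℂ) : Prop :=
  ‖ρ‖ = 1 ∧ ∀ a : A, 0 ≤ ρ (star a * a)

/-- `n` is a normalizer for the inclusion `(A, D)`:  `n D n* ∪ n* D n ⊆ D`. -/
def IsNormalizer (D : NonUnitalStarSubalgebra ℂ A) (n : A) : Prop :=
  ∀ d ∈ D, n * d * star n ∈ D ∧ star n * d * n ∈ D

/-- The inclusion `(A, D)` is regular: the linear span of the normalizers is norm-dense in `A`. -/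
def IsRegularInclusion (D : NonUnitalStarSubalgebra ℂ A) : Prop :=
  Dense (↑(Submodule.span ℂ {n : A | IsNormalizer D n}) : Set A)

/-- `D` is a maximal abelian *-subalgebra (MASA) of `A`:  the set of elements of `A` commuting
with `D` is exactly `D`.  (This encodes simultaneously that `D` is abelian and that it is
maximal among abelian *-subalgebras.) -/
def IsMasa (D : NonUnitalStarSubalgebra ℂ A) : Prop :=
  {a : A | ∀ d ∈ D, a * d = d * a} = (D : Set A)

end CartanPaper

open CartanPaper

namespace CartanPaper

variable {A : Type*} [NonUnitalCStarAlgebra A]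

/-- The norm closure of `n n* D` (for `n` a normalizer of `D`). Note that
`rangeIdeal (star n) D` is then the norm closure of `n* n D`. -/
def rangeIdeal (n : A) (D : NonUnitalStarSubalgebra ℂ A) : Set A :=
  closure {x : A | ∃ d ∈ D, x = n * star n * d}

/-- The characterizing properties of the partial automorphism `θ_n` associated to a normalizer
`n`. -/
def ThetaProps (D : NonUnitalStarSubalgebra ℂ A) (n : A) (θ : A → A) : Prop :=
  Set.BijOn θ (rangeIdeal n D) (rangeIdeal (star n) D) ∧
  ContinuousOn θ (rangeIdeal n D) ∧
  (∀ x ∈ rangeIdeal n D, ∀ y ∈ rangeIdeal n D, θ (x + y) = θ x + θ y) ∧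
  (∀ c : ℂ, ∀ x ∈ rangeIdeal n D, θ (c • x) = c • θ x) ∧
  (∀ x ∈ rangeIdeal n D, ∀ y ∈ rangeIdeal n D, θ (x * y) = θ x * θ y) ∧
  (∀ x ∈ rangeIdeal n D, θ (star x) = star (θ x)) ∧
  (∀ d ∈ D, θ (n * star n * d) = star n * d * n) ∧
  (∀ h ∈ rangeIdeal n D, n * θ h = h * n)

variable (D : NonUnitalStarSubalgebra ℂ A) [IsClosed (D : Set A)]

/-- `dom n`: the set of characters `σ` of `D` (points of the Gelfand spectrum of `D`) with
`σ (n* n D) ≠ 0`. -/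
def domSet (n : A) : Set (WeakDual.characterSpace ℂ D) :=
  {σ | ∃ x : D, (∃ d ∈ D, (x : A) = star n * n * d) ∧ σ x ≠ 0}

/-- `ran n`: the set of characters `σ` of `D` with `σ (n n* D) ≠ 0`. -/
def ranSet (n : A) : Set (WeakDual.characterSpace ℂ D) :=
  {σ | ∃ x : D, (∃ d ∈ D, (x : A) = n * star n * d) ∧ σ x ≠ 0}

end CartanPaper

namespace CartanPaper

section Aux

variable {A : Type*} [NonUnitalCStarAlgebra A]

/-- A C*-algebra has a contractive self-adjoint approximate unit; the spectral order used to
produce it does not appear in the conclusion. -/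
lemma exists_approxUnit (B : Type*) [NonUnitalCStarAlgebra B] :
    ∃ l : Filter B, l.NeBot ∧ (∀ x, Tendsto (fun u => x * u) l (𝓝 x)) ∧
      (∀ x, Tendsto (fun u => u * x) l (𝓝 x)) ∧ ∀ᶠ u in l, ‖u‖ ≤ 1 ∧ star u = u := by
  let := CStarAlgebra.spectralOrder B
  have := CStarAlgebra.spectralOrderedRing B
  have h := CStarAlgebra.increasingApproximateUnit B
  exact ⟨_, h.neBot, h.tendsto_mul_left, h.tendsto_mul_right,
    h.eventually_norm.and h.eventually_star_eq⟩

lemma IsNormalizer.adjoint {D : NonUnitalStarSubalgebra ℂ A} {n : A} (hn : IsNormalizer D n) :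
    IsNormalizer D (star n) := fun d hd => by
  rw [star_star]
  exact ⟨(hn d hd).2, (hn d hd).1⟩

/-- Although `n* n` need not lie in `D`, it multiplies `D` into `D`. Along an approximate unit
`u` of `D` one has `u n d → n d`, because `n d d* n* ∈ D`; hence `n* n d` is the limit of the
elements `(n* u n) d` of `D`. -/
lemma IsNormalizer.star_mul_self_mul_mem {D : NonUnitalStarSubalgebra ℂ A}
    [hD : IsClosed (D : Set A)] {n : A} (hn : IsNormalizer D n) {d : A} (hd : d ∈ D) :
    star n * n * d ∈ D := by
  obtain ⟨l, hl, -, hleft, hnorm⟩ := exists_approxUnit D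
  set z : D := ⟨n * (d * star d) * star n, (hn _ (mul_mem hd (star_mem hd))).1⟩ with hz
  have hlim : Tendsto (fun u : D => 2 * ‖u * z - z‖) l (𝓝 0) := by
    have := ((hleft z).sub_const z).norm.const_mul 2
    simpa using this
  have hsq : Tendsto (fun u : D => ‖(u : A) * (n * d) - n * d‖ ^ 2) l (𝓝 0) := by
    refine squeeze_zero' (.of_forall fun _ => by positivity) ?_ hlim
    filter_upwards [hnorm] with u hu
    have hsu : star (u : A) = u := congrArg Subtype.val hu.2
    have hprod : ((u : A) * (n * d) - n * d) * star ((u : A) * (n * d) - n * d)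
        = ((u * z - z : D) : A) * u - ((u * z - z : D) : A) := by
      simp only [hz, star_sub, star_mul, hsu, NonUnitalStarSubalgebra.coe_sub,
        NonUnitalStarSubalgebra.coe_mul]
      noncomm_ring
    calc ‖(u : A) * (n * d) - n * d‖ ^ 2
        = ‖((u * z - z : D) : A) * u - ((u * z - z : D) : A)‖ := by
          rw [← hprod, CStarRing.norm_self_mul_star, sq]
      _ ≤ ‖u * z - z‖ * ‖u‖ + ‖u * z - z‖ :=
          (norm_sub_le _ _).trans (add_le_add (norm_mul_le _ _) le_rfl)
      _ ≤ 2 * ‖u * z - z‖ := by nlinarith [norm_nonneg (u * z - z), hu.1]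
  have hconv : Tendsto (fun u : D => (u : A) * (n * d)) l (𝓝 (n * d)) := by
    rw [tendsto_iff_norm_sub_tendsto_zero]
    have := hsq.sqrt
    simpa using this
  have hfin := hconv.const_mul (star n)
  rw [← mul_assoc] at hfin
  refine hD.mem_of_tendsto hfin (.of_forall fun u => ?_)
  have := mul_mem (hn _ u.2).2 hd
  simpa only [mul_assoc, SetLike.mem_coe] using this

/-- `n* n` commutes with `D`. The commutator `x` of `n* n` and `d` lies in `D` and annihilates
`D`, so `x x* = 0`. -/
lemma IsNormalizer.star_mul_self_comm {D : NonUnitalStarSubalgebra ℂ A}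
    [hD : IsClosed (D : Set A)] (hab : ∀ x ∈ D, ∀ y ∈ D, x * y = y * x) {n : A}
    (hn : IsNormalizer D n) {d : A} (hd : d ∈ D) :
    star n * n * d = d * (star n * n) := by
  have hr : ∀ e ∈ D, e * (star n * n) ∈ D := fun e he => by
    have := star_mem (hn.star_mul_self_mul_mem (star_mem he))
    simpa only [star_mul, star_star] using this
  set a := star n * n with ha
  have hx : a * d - d * a ∈ D := sub_mem (hn.star_mul_self_mul_mem hd) (hr d hd)
  have key : ∀ e ∈ D, (a * d - d * a) * e = 0 := fun e he => by
    have h1 : a * d * e = d * a * e := by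
      calc a * d * e = a * (e * d) := by rw [mul_assoc, hab d hd e he]
        _ = (a * e) * d := (mul_assoc a e d).symm
        _ = d * (a * e) := hab _ (hn.star_mul_self_mul_mem he) _ hd
        _ = d * a * e := (mul_assoc d a e).symm
    rw [sub_mul, h1, sub_self]
  exact sub_eq_zero.mp (CStarRing.mul_star_self_eq_zero_iff _ |>.mp (key _ (star_mem hx)))

/-- The form `⟪x, y⟫ = ρ (x* y)` of a positive functional `ρ` is Hermitian, by polarization. -/
lemma conj_apply_star_mul {ρ : A →L[ℂ] ℂ} (hρ : ∀ a : A, 0 ≤ ρ (star a * a)) (x y : A) :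
    starRingEnd ℂ (ρ (star y * x)) = ρ (star x * y) := by
  have im0 : ∀ a : A, (ρ (star a * a)).im = 0 := fun a => (Complex.nonneg_iff.mp (hρ a)).2.symm
  have h1 := im0 (x + y)
  have h2 := im0 (x + Complex.I • y)
  simp only [star_add, star_smul, add_mul, mul_add, map_add, smul_mul_assoc, mul_smul_comm,
    map_smul, Complex.add_im, smul_eq_mul, im0, Complex.star_def, Complex.conj_I, Complex.mul_im,
    Complex.neg_re, Complex.neg_im, Complex.I_re, Complex.I_im, Complex.mul_re] at h1 h2
  apply Complex.ext <;> simp only [Complex.conj_re, Complex.conj_im] <;> linarith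

lemma norm_apply_sq_le {ρ : A →L[ℂ] ℂ} (hρ : ∀ a : A, 0 ≤ ρ (star a * a)) (x y : A) :
    ‖ρ (star x * y)‖ ^ 2 ≤ (ρ (star x * x)).re * (ρ (star y * y)).re := by
  let c : PreInnerProductSpace.Core ℂ A :=
    { inner := fun x y => ρ (star x * y)
      conj_inner_symm := fun x y => conj_apply_star_mul hρ x y
      re_inner_nonneg := fun x => (Complex.nonneg_iff.mp (hρ x)).1
      add_left := fun x y z => by simp only [star_add, add_mul, map_add]
      smul_left := fun x y r => by
        simp only [star_smul, smul_mul_assoc, map_smul, smul_eq_mul, Complex.star_def] }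
  have h := InnerProductSpace.Core.inner_mul_inner_self_le (𝕜 := ℂ) x y
  rw [InnerProductSpace.Core.norm_inner_symm y x, ← sq] at h
  exact h

/-- An element `d` with `ρ d = ρ (d* d) = 1` behaves like a unit for the state `ρ`: along an
approximate unit `u` of `A`, the Cauchy-Schwarz inequality bounds `|ρ (x (u - d))|²` by a multiple
of `ρ ((u - d)* (u - d)) ≤ 2 - 2 Re ρ (u d) → 0`. -/
lemma IsState.apply_mul_eq {ρ : A →L[ℂ] ℂ} (hρ : IsState ρ) {d : A} (hd : ρ d = 1)
    (hdd : ρ (star d * d) = 1) (x : A) : ρ (x * d) = ρ x := by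
  obtain ⟨l, hl, hright, hleft, hnorm⟩ := exists_approxUnit A
  have hL : Tendsto (fun u => ‖ρ (x * (u - d))‖ ^ 2) l (𝓝 (‖ρ (x - x * d)‖ ^ 2)) := by
    have h0 : Tendsto (fun u => x * (u - d)) l (𝓝 (x - x * d)) := by
      simpa only [mul_sub] using (hright x).sub_const (x * d)
    exact ((ρ.continuous.tendsto _).comp h0).norm.pow 2
  have hR : Tendsto (fun u => (ρ (x * star x)).re * (2 - 2 * (ρ (u * d)).re)) l (𝓝 0) := by
    have h0 : Tendsto (fun u => (ρ (u * d)).re) l (𝓝 1) := by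
      have := (Complex.continuous_re.tendsto _).comp ((ρ.continuous.tendsto _).comp (hleft d))
      simpa [hd, Function.comp_def] using this
    have := ((h0.const_mul 2).const_sub 2).const_mul (ρ (x * star x)).re
    simpa using this
  have hle : ‖ρ (x - x * d)‖ ^ 2 ≤ 0 := by
    refine le_of_tendsto_of_tendsto hL hR ?_
    filter_upwards [hnorm] with u hu
    have hcs := norm_apply_sq_le hρ.2 (star x) (u - d)
    rw [star_star] at hcs
    refine hcs.trans (mul_le_mul_of_nonneg_left ?_ ?_)
    · have huu : (ρ (star u * u)).re ≤ 1 := by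
        refine (Complex.re_le_norm _).trans ((ρ.le_opNorm _).trans ?_)
        rw [hρ.1, one_mul, CStarRing.norm_star_mul_self]
        exact mul_le_one₀ hu.1 (norm_nonneg _) hu.1
      have hconj : (ρ (star d * u)).re = (ρ (u * d)).re := by
        rw [← conj_apply_star_mul hρ.2, Complex.conj_re, hu.2]
      have hexp : ρ (star (u - d) * (u - d))
          = ρ (star u * u) - ρ (u * d) - ρ (star d * u) + ρ (star d * d) := by
        simp only [star_sub, sub_mul, mul_sub, map_sub, hu.2]
        ring
      rw [hexp, hdd]
      simp only [Complex.add_re, Complex.sub_re, Complex.one_re, hconj]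
      linarith
    · have := hρ.2 (star x)
      rw [star_star] at this
      exact (Complex.nonneg_iff.mp this).1
  have h0 : ρ (x - x * d) = 0 := by
    rw [← norm_eq_zero]
    exact pow_eq_zero_iff two_ne_zero |>.mp (le_antisymm hle (sq_nonneg _))
  rw [map_sub, sub_eq_zero] at h0
  exact h0.symm

/-- States are self-adjoint functionals. -/
lemma IsState.apply_star {ρ : A →L[ℂ] ℂ} (hρ : IsState ρ) (x : A) :
    ρ (star x) = starRingEnd ℂ (ρ x) := by
  obtain ⟨l, hl, hright, hleft, hnorm⟩ := exists_approxUnit A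
  have h1 : Tendsto (fun u => ρ (star x * u)) l (𝓝 (ρ (star x))) :=
    (ρ.continuous.tendsto _).comp (hright (star x))
  have h2 : Tendsto (fun u => starRingEnd ℂ (ρ (u * x))) l (𝓝 (starRingEnd ℂ (ρ x))) :=
    (Complex.continuous_conj.tendsto _).comp ((ρ.continuous.tendsto _).comp (hleft x))
  refine tendsto_nhds_unique_of_eventuallyEq h1 h2 ?_
  filter_upwards [hnorm] with u hu
  rw [← conj_apply_star_mul hρ.2, hu.2]

variable {D : NonUnitalStarSubalgebra ℂ A}

/-- The character `σ` of `D` takes the value `c` at the multiplier `m * n` of `D`, that is,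
`σ (m n e) = c σ(e)` for `e ∈ D`. It is used for `m = n*`, where `c` is the number written
`σ (n* n)`. -/
def TakesValue (D : NonUnitalStarSubalgebra ℂ A) (m n : A) (σ : WeakDual.characterSpace ℂ D)
    (c : ℂ) : Prop :=
  ∀ e y : D, (y : A) = m * n * e → σ y = c * σ e

/-- The relation `τ = β_n(σ)` between characters of `D`, where `m = n*`: there is a nonzero value
`c = σ (n* n)` with `c τ(d) = σ (n* d n)` for all `d ∈ D`. -/
def BetaRel (D : NonUnitalStarSubalgebra ℂ A) (m n : A)
    (σ τ : WeakDual.characterSpace ℂ D) : Prop :=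
  ∃ c : ℂ, c ≠ 0 ∧ TakesValue D m n σ c ∧ ∀ d x : D, (x : A) = m * d * n → c * τ d = σ x

lemma exists_apply_ne_zero (σ : WeakDual.characterSpace ℂ D) : ∃ e : D, σ e ≠ 0 := by
  by_contra! h
  exact σ.2.1 (DFunLike.ext _ _ h)

lemma ranSet_eq_domSet_star [IsClosed (D : Set A)] (n : A) :
    ranSet D n = domSet D (star n) := by
  simp only [ranSet, domSet, star_star]

lemma isOpen_domSet [IsClosed (D : Set A)] (n : A) : IsOpen (domSet D n) := by
  have : domSet D n = ⋃ x ∈ {x : D | ∃ d ∈ D, (x : A) = star n * n * d},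
      {σ : WeakDual.characterSpace ℂ D | σ x ≠ 0} := by
    ext σ
    simp [domSet]
  rw [this]
  refine isOpen_biUnion fun x _ => ?_
  exact isOpen_ne_fun ((WeakDual.eval_continuous x).comp continuous_subtype_val) continuous_const

/-- The map `d ↦ n* d n` on `D`. -/
def compress {n : A} (hn : IsNormalizer D n) : D →L[ℂ] D where
  toFun d := ⟨star n * d * n, (hn d d.2).2⟩
  map_add' x y := Subtype.ext (by simp [mul_add, add_mul])
  map_smul' c x := Subtype.ext (by simp [mul_smul_comm, smul_mul_assoc])
  cont := by
    refine Continuous.subtype_mk ?_ _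
    exact (continuous_const.mul continuous_subtype_val).mul continuous_const

/-- Every character in `dom n` has a nonzero value at `n* n`. -/
lemma exists_takesValue [IsClosed (D : Set A)] (hab : ∀ x ∈ D, ∀ y ∈ D, x * y = y * x) {n : A}
    (hn : IsNormalizer D n) {σ : WeakDual.characterSpace ℂ D} (hσ : σ ∈ domSet D n) :
    ∃ c : ℂ, c ≠ 0 ∧ TakesValue D (star n) n σ c := by
  have cross : ∀ e y e' y' : D, (y : A) = star n * n * e → (y' : A) = star n * n * e' →
      σ y * σ e' = σ y' * σ e := by
    intro e y e' y' hy hy'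
    rw [← map_mul, ← map_mul]
    congr 1
    ext
    simp only [NonUnitalStarSubalgebra.coe_mul, hy, hy']
    rw [mul_assoc _ (e : A), hab _ e.2 _ e'.2, mul_assoc _ (e' : A)]
  obtain ⟨x, ⟨d, hd, hx⟩, hσx⟩ := hσ
  have hσd : σ ⟨d, hd⟩ ≠ 0 := by
    intro h0
    -- comparing `d` with `x = n* n d` itself gives `σ(x)² = σ(n* n x) σ(d)`
    have := cross ⟨d, hd⟩ x x ⟨_, hn.star_mul_self_mul_mem x.2⟩ hx rfl
    rw [h0, mul_zero] at this
    exact hσx (mul_self_eq_zero.mp this)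
  refine ⟨σ x / σ ⟨d, hd⟩, div_ne_zero hσx hσd, fun e y hy => ?_⟩
  have := cross ⟨d, hd⟩ x e y hx hy
  field_simp
  exact this.symm

/-- Existence of `β_n(σ)`: the functional `d ↦ σ (n* d n) / σ (n* n)` is a character in `ran n`. -/
lemma exists_betaRel [IsClosed (D : Set A)] (hab : ∀ x ∈ D, ∀ y ∈ D, x * y = y * x) {n : A}
    (hn : IsNormalizer D n) {σ : WeakDual.characterSpace ℂ D} (hσ : σ ∈ domSet D n) :
    ∃ τ ∈ ranSet D n, BetaRel D (star n) n σ τ := by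
  obtain ⟨c, hc, hval⟩ := exists_takesValue hab hn hσ
  obtain ⟨e, he⟩ := exists_apply_ne_zero σ
  have hcomm : ∀ f ∈ D, n * star n * f = f * (n * star n) := fun f hf => by
    simpa only [star_star] using hn.adjoint.star_mul_self_comm hab hf
  set φ : D →L[ℂ] ℂ := c⁻¹ • (WeakDual.CharacterSpace.toCLM σ ∘L compress hn) with hφ
  have hφd : ∀ d, φ d = c⁻¹ * σ (compress hn d) := fun d => rfl
  -- the character is nonzero at `f = n e n*`, since `n* f n = n* n (n* n e)`
  set f : D := ⟨n * e * star n, (hn e e.2).1⟩ with hf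
  have hσf : σ (compress hn f) ≠ 0 := by
    have h1 : σ (compress hn f) = c * (c * σ e) := by
      rw [← hval e ⟨_, hn.star_mul_self_mul_mem e.2⟩ rfl]
      refine hval _ _ ?_
      change star n * (n * e * star n) * n = star n * n * (star n * n * e)
      rw [hn.star_mul_self_comm hab e.2]
      noncomm_ring
    rw [h1]
    exact mul_ne_zero hc (mul_ne_zero hc he)
  have hφf : φ f ≠ 0 := by
    rw [hφd]
    exact mul_ne_zero (inv_ne_zero hc) hσf
  have hmul : ∀ x y, φ (x * y) = φ x * φ y := by
    intro x y
    have h1 : σ (compress hn x) * σ (compress hn y) = c * σ (compress hn (x * y)) := by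
      rw [← map_mul]
      refine hval _ _ ?_
      change star n * x * n * (star n * y * n) = star n * n * (star n * (x * y) * n)
      calc star n * (x : A) * n * (star n * y * n)
          = star n * (x * (n * star n)) * y * n := by noncomm_ring
        _ = star n * n * (star n * (x * y) * n) := by
          rw [← hcomm x x.2]
          noncomm_ring
    simp only [hφd]
    rw [mul_mul_mul_comm, h1]
    field_simp
  refine ⟨⟨StrongDual.toWeakDual φ, fun h0 => hφf ?_, hmul⟩, ?_, c, hc, hval, fun d x hx => ?_⟩
  · exact DFunLike.congr_fun h0 f
  · have hmem : n * star n * f ∈ D := by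
      simpa only [star_star] using hn.adjoint.star_mul_self_mul_mem f.2
    refine ⟨⟨_, hmem⟩, ⟨f, f.2, rfl⟩, ?_⟩
    change φ _ ≠ 0
    have h2 : σ (compress hn ⟨_, hmem⟩) = c * σ (compress hn f) := by
      refine hval _ _ ?_
      change star n * (n * star n * (f : A)) * n = star n * n * (star n * f * n)
      noncomm_ring
    rw [hφd, h2]
    exact mul_ne_zero (inv_ne_zero hc) (mul_ne_zero hc hσf)
  · change c * φ d = σ x
    rw [hφd, show compress hn d = x from Subtype.ext hx.symm]
    field_simp

/-- `β_{n*}` inverts `β_n`. The value of `β_n(σ)` at `n n*` equals the value `c` of `σ` at `n* n`,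
so both characters agree up to the factor `c² / (c c) = 1`. -/
lemma BetaRel.inverse [IsClosed (D : Set A)] (hab : ∀ x ∈ D, ∀ y ∈ D, x * y = y * x) {m n : A}
    (hmn : m = star n) (hn : IsNormalizer D n) {σ τ σ' : WeakDual.characterSpace ℂ D}
    (h : BetaRel D m n σ τ) (h' : BetaRel D n m τ σ') : σ' = σ := by
  subst hmn
  obtain ⟨c, hc, hval, hτ⟩ := h
  obtain ⟨c', hc', hval', hσ'⟩ := h'
  have hcc : c' = c := by
    obtain ⟨f, hf⟩ := exists_apply_ne_zero τ
    have hmem : n * star n * f ∈ D := by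
      simpa only [star_star] using hn.adjoint.star_mul_self_mul_mem f.2
    have h1 := hτ ⟨_, hmem⟩ _ (rfl : ((compress hn ⟨_, hmem⟩ : D) : A) = _)
    have h2 : σ (compress hn ⟨_, hmem⟩) = c * σ (compress hn f) := by
      refine hval _ _ ?_
      change star n * (n * star n * (f : A)) * n = star n * n * (star n * f * n)
      noncomm_ring
    rw [h2, hval' f _ rfl, ← hτ f (compress hn f) rfl] at h1
    exact mul_right_cancel₀ hf (mul_left_cancel₀ hc h1)
  subst hcc
  ext d
  set g : D := ⟨n * d * star n, (hn d d.2).1⟩ with hg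
  have h3 : σ (compress hn g) = c' * (c' * σ d) := by
    rw [← hval d ⟨_, hn.star_mul_self_mul_mem d.2⟩ rfl]
    refine hval _ _ ?_
    change star n * (n * d * star n) * n = star n * n * (star n * n * d)
    rw [hn.star_mul_self_comm hab d.2]
    noncomm_ring
  rw [← hτ g _ rfl, ← hσ' d g rfl] at h3
  exact mul_left_cancel₀ hc (mul_left_cancel₀ hc h3)

/-- A map realizing `σ ↦ β_n(σ)` is continuous: near `σ₀` it is given by
`β_n(σ)(d) = σ (n* d n) σ(e) / σ (n* n e)` with `e ∈ D` fixed such that `σ₀ (n* n e) ≠ 0`. -/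
lemma continuous_of_betaRel [IsClosed (D : Set A)] {n : A} (hn : IsNormalizer D n)
    (β : domSet D n → ranSet D n) (hβ : ∀ σ, BetaRel D (star n) n σ.1 (β σ).1) :
    Continuous β := by
  have hev : ∀ d : D, Continuous fun σ : domSet D n => σ.1 d := fun d =>
    (WeakDual.eval_continuous d).comp (continuous_subtype_val.comp continuous_subtype_val)
  refine Continuous.subtype_mk (f := fun σ => (β σ).1) ?_ fun σ => (β σ).2
  refine Continuous.subtype_mk (f := fun σ => (β σ).1.1) ?_ fun σ => (β σ).1.2
  refine WeakDual.continuous_of_continuous_eval fun d => ?_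
  change Continuous fun σ => (β σ).1 d
  rw [continuous_iff_continuousAt]
  intro σ₀
  obtain ⟨y, ⟨e, he, hy⟩, hσy⟩ := σ₀.2
  have hnear : ∀ᶠ σ : domSet D n in 𝓝 σ₀, σ.1 y ≠ 0 := (hev y).continuousAt.eventually_ne hσy
  have hform : (fun σ : domSet D n => σ.1 (compress hn d) * σ.1 ⟨e, he⟩ / σ.1 y)
      =ᶠ[𝓝 σ₀] fun σ => (β σ).1 d := by
    filter_upwards [hnear] with σ hσ
    obtain ⟨c, hc, hval, hτ⟩ := hβ σ
    rw [div_eq_iff hσ, hval ⟨e, he⟩ y hy, ← hτ d (compress hn d) rfl]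
    ring
  refine ContinuousAt.congr ?_ hform
  exact ((hev _).continuousAt.mul (hev _).continuousAt).div (hev _).continuousAt hσy

/-- The map `σ ↦ β_n(σ)` is a homeomorphism `dom n ≃ ran n`. -/
lemma exists_homeomorph [IsClosed (D : Set A)] (hab : ∀ x ∈ D, ∀ y ∈ D, x * y = y * x) {n : A}
    (hn : IsNormalizer D n) :
    ∃ β : domSet D n ≃ₜ ranSet D n, ∀ σ, BetaRel D (star n) n σ.1 (β σ).1 := by
  have hmap : ∀ m : A, IsNormalizer D m → ∃ β : domSet D m → ranSet D m,
      Continuous β ∧ ∀ σ, BetaRel D (star m) m σ.1 (β σ).1 := by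
    intro m hm
    choose β hβ hrel using fun σ : domSet D m => exists_betaRel hab hm σ.2
    exact ⟨fun σ => ⟨β σ, hβ σ⟩, continuous_of_betaRel hm _ hrel, hrel⟩
  obtain ⟨β, hβc, hβ⟩ := hmap n hn
  obtain ⟨γ, hγc, hγ⟩ := hmap (star n) hn.adjoint
  have hdom : ranSet D (star n) = domSet D n := by rw [ranSet_eq_domSet_star, star_star]
  rw [star_star] at hγ
  revert γ
  rw [hdom, ← ranSet_eq_domSet_star]
  intro γ hγc hγ
  refine ⟨⟨⟨β, γ, fun σ => ?_, fun τ => ?_⟩, hβc, hγc⟩, hβ⟩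
  · exact Subtype.ext (BetaRel.inverse hab rfl hn (hβ σ) (hγ (β σ)))
  · exact Subtype.ext
      (BetaRel.inverse hab (star_star n).symm hn.adjoint (hγ τ) (hβ (γ τ)))

/-- A state extending `σ` sends `n* n` to the value of `σ` at `n* n`. -/
lemma TakesValue.eq_apply_state [IsClosed (D : Set A)] {n : A} (hn : IsNormalizer D n)
    {σ : WeakDual.characterSpace ℂ D} {c : ℂ} (h : TakesValue D (star n) n σ c)
    {ρ : A →L[ℂ] ℂ} (hρ : IsState ρ) (hext : ∀ x : D, ρ x = σ x) : ρ (star n * n) = c := by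
  obtain ⟨e, he⟩ := exists_apply_ne_zero σ
  set d : D := (σ e)⁻¹ • e with hd
  have hσd : σ d = 1 := by
    rw [hd, map_smul, smul_eq_mul, inv_mul_cancel₀ he]
  have hdd : ρ (star (d : A) * d) = 1 := by
    have h1 : σ (star d) = 1 := by
      rw [← hext]
      change ρ (star (d : A)) = 1
      rw [hρ.apply_star, hext, hσd, map_one]
    have h2 := hext (star d * d)
    rw [map_mul, h1, hσd, mul_one] at h2
    exact h2
  rw [← hρ.apply_mul_eq ((hext d).trans hσd) hdd (star n * n)]
  have := h d ⟨_, hn.star_mul_self_mul_mem d.2⟩ rfl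
  rw [hσd, mul_one, ← hext] at this
  exact this

end Aux

end CartanPaper

/-- Let `(A, D)` be an inclusion of C*-algebras and `n ∈ N(A, D)`.  Then
`dom n` and `ran n` are open in the Gelfand spectrum of `D`, and (for `θ` the partial
automorphism `θ_n` of the closures of `n n* D` and `n* n D`) there is a homeomorphism
`β : dom n ≃ₜ ran n` with `β σ h = σ (θ h)` for `h` in the closure of `n n* D`.  Moreover,
for `σ ∈ dom n` all state extensions `ρ` of `σ` to `A` give the same value `ρ (n* n)`, this
common value is nonzero, and `β σ d = σ (n* d n) / σ (n* n)` for every `d ∈ D`. -/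
theorem stmt_6 {A : Type*} [NonUnitalCStarAlgebra A]
    (D : NonUnitalStarSubalgebra ℂ A) [IsClosed (D : Set A)]
    (hDabelian : ∀ x ∈ D, ∀ y ∈ D, x * y = y * x)
    (n : A) (hn : IsNormalizer D n)
    (θ : A → A) (hθ : ThetaProps D n θ) :
    IsOpen (domSet D n) ∧ IsOpen (ranSet D n) ∧
    ∃ β : domSet D n ≃ₜ ranSet D n,
      (∀ σ : domSet D n, ∀ h h' : D, (h : A) ∈ rangeIdeal n D → (h' : A) = θ h →
        (β σ).1 h = σ.1 h') ∧
      (∀ σ : domSet D n,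
        (∀ ρ₁ ρ₂ : A →L[ℂ] ℂ, IsState ρ₁ → IsState ρ₂ →
          (∀ x : D, ρ₁ x = σ.1 x) → (∀ x : D, ρ₂ x = σ.1 x) →
            ρ₁ (star n * n) = ρ₂ (star n * n)) ∧
        (∀ ρ : A →L[ℂ] ℂ, IsState ρ → (∀ x : D, ρ x = σ.1 x) →
          ρ (star n * n) ≠ 0 ∧
          ∀ d x : D, (x : A) = star n * (d : A) * n →
            (β σ).1 d = σ.1 x / ρ (star n * n))) := by
  obtain ⟨β, hβ⟩ := exists_homeomorph hDabelian hn
  refine ⟨isOpen_domSet n, ranSet_eq_domSet_star (D := D) n ▸ isOpen_domSet (star n), β, ?_, ?_⟩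
  · intro σ h h' hh hθh
    obtain ⟨c, hc, hval, hτ⟩ := hβ σ
    obtain ⟨-, -, -, -, -, -, -, hint⟩ := hθ
    -- `n θ(h) = h n` gives `n* h n = n* n θ(h)`
    have h1 : ((compress hn h : D) : A) = star n * n * h' := by
      change star n * (h : A) * n = _
      rw [hθh, mul_assoc, mul_assoc, hint _ hh]
    have h2 := hval h' _ h1
    rw [← hτ h _ rfl] at h2
    exact mul_left_cancel₀ hc h2
  · intro σ
    obtain ⟨c, hc, hval, hτ⟩ := hβ σ
    refine ⟨fun ρ₁ ρ₂ h₁ h₂ e₁ e₂ => ?_, fun ρ hρ hext => ?_⟩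
    · rw [hval.eq_apply_state hn h₁ e₁, hval.eq_apply_state hn h₂ e₂]
    · rw [hval.eq_apply_state hn hρ hext]
      refine ⟨hc, fun d x hx => ?_⟩
      rw [eq_div_iff hc, mul_comm]
      exact hτ d x hx
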